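/- FC(4, 10) ≥ 16; that is, there exists a family of 15 distinct 4-element subsets of {1,…,10} whose universe equals {1,…,10} that is Non-FC. -/

import Mathlib

/-- The universe of a family of finite sets: the union of all its members. -/
def famUniverse (A : Finset (Finset ℕ)) : Finset ℕ := A.sup id

/-- A family is union-closed if it is nonempty and closed under pairwise unions. -/
def UnionClosed (F : Finset (Finset ℕ)) : Prop :=
  F.Nonempty ∧ ∀ A ∈ F, ∀ B ∈ F, A ∪ B ∈ F

/-- A family `A` is FC (Frankl-Complete) if for every union-closed family `F`
containing `A`, some element of the universe of `A` belongs to at least half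
of the members of `F`. -/
def IsFC (A : Finset (Finset ℕ)) : Prop :=
  ∀ F : Finset (Finset ℕ), UnionClosed F → A ⊆ F →
    ∃ x ∈ famUniverse A, F.card ≤ 2 * (F.filter (fun S => x ∈ S)).card

/-- `IsKFamily k n A` means `A` is a family of (distinct) `k`-element subsets of
`[n] = {1, …, n}` whose universe equals `[n]`. -/
def IsKFamily (k n : ℕ) (A : Finset (Finset ℕ)) : Prop :=
  (∀ S ∈ A, S.card = k ∧ S ⊆ Finset.Icc 1 n) ∧ famUniverse A = Finset.Icc 1 n

/-- The set of positive integers `m` such that every family of `m` distinct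
`k`-element subsets of `[n]` with universe `[n]` is FC.  `FC(k, n)` is the least
element of this set, when it exists. -/
def FCwitnesses (k n : ℕ) : Set ℕ :=
  {m : ℕ | 0 < m ∧ ∀ A : Finset (Finset ℕ), A.card = m → IsKFamily k n A → IsFC A}

/-!
After Poonen. Put aside the universe `X` of `A` a large set `Y` of fresh elements, attach to each
`y ∈ Y` a union-closed family `B y ⊇ A` of subsets of `X`, and consider the sets `T ∪ Y`
(`T ⊆ X`), `T ∪ (Y \ {y})` (`T ∈ B y`) and `T` (`T` in every `B y`). They form a union-closed
family containing `A`. All but boundedly many of its members are of the second kind, so if each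
`z ∈ X` is rare on average in the `B y`, then it is rare in the whole family.

For `B y` we take the sets `T` in which a given `x ∈ X` is either absent or lies in a member of
`A` contained in `T`. Every `z ∈ X` lies in exactly half of all subsets of `X`, so it is rare in
the `B y` when it is frequent in their complements; weighting the elements `x`, this becomes a
finite inequality about how often `z` lies in `T`, each `T` counted with the total weight of its
uncovered elements.
-/

namespace FranklComplete

open Finset

section Balance

variable {α : Type*} [DecidableEq α]

/-- The sign of the membership of `z` in `S`: `1` if `z ∈ S`, and `-1` otherwise. -/
def membershipSign (z : α) (S : Finset α) : ℤ := if z ∈ S then 1 else -1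

/-- The balance of `z` in the family `F`: the number of members of `F` containing `z` minus the
number of members avoiding it. It is negative exactly when `z` lies in less than half of `F`. -/
def balance (z : α) (F : Finset (Finset α)) : ℤ := ∑ S ∈ F, membershipSign z S

lemma membershipSign_union_of_notMem {z : α} {R : Finset α} (hz : z ∉ R) (T : Finset α) :
    membershipSign z (T ∪ R) = membershipSign z T := by
  simp [membershipSign, hz]

lemma balance_eq_two_mul_card_sub_card (z : α) (F : Finset (Finset α)) :
    balance z F = 2 * #{S ∈ F | z ∈ S} - #F := by
  have hcard : (#{S ∈ F | z ∈ S} + #{S ∈ F | z ∉ S} : ℤ) = #F := by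
    exact_mod_cast card_filter_add_card_filter_not (s := F) (z ∈ ·)
  simp only [balance, membershipSign, sum_ite, sum_const, nsmul_eq_mul]
  linarith

lemma balance_filter_add_balance_filter_not (z : α) (F : Finset (Finset α))
    (p : Finset α → Prop) [DecidablePred p] :
    balance z {S ∈ F | p S} + balance z {S ∈ F | ¬ p S} = balance z F :=
  sum_filter_add_sum_filter_not F p _

lemma balance_le_card (z : α) (F : Finset (Finset α)) : balance z F ≤ #F := by
  have hsign : ∀ S ∈ F, membershipSign z S ≤ 1 := fun S _ ↦ by
    unfold membershipSign; split_ifs <;> norm_num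
  simpa [balance] using sum_le_sum hsign

lemma balance_powerset {z : α} {X : Finset α} (hz : z ∈ X) : balance z X.powerset = 0 := by
  rw [← insert_erase hz, balance, sum_powerset_insert (notMem_erase z X), ← sum_add_distrib]
  refine sum_eq_zero fun T hT ↦ ?_
  have hzT : z ∉ T := fun h ↦ notMem_erase z X (mem_powerset.1 hT h)
  simp [membershipSign, hzT]

end Balance

section Layered

variable {α : Type*} [DecidableEq α] {X Y : Finset α} {B : α → Finset (Finset α)}

/-- The layered family over `X` with fresh elements `Y`: for `T ⊆ X`, it contains every `T ∪ Y`,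
it contains `T ∪ (Y \ {y})` when `T ∈ B y`, and it contains `T` when `T` lies in every `B y`.
These three layers are told apart by the trace of a member `S` on `Y`. -/
def layeredFamily (X Y : Finset α) (B : α → Finset (Finset α)) : Finset (Finset α) :=
  {S ∈ (X ∪ Y).powerset | (∀ y ∈ Y \ S, S ∩ X ∈ B y) ∧ (#(Y \ S) ≤ 1 ∨ Y \ S = Y)}

lemma mem_layeredFamily {S : Finset α} :
    S ∈ layeredFamily X Y B ↔
      S ⊆ X ∪ Y ∧ (∀ y ∈ Y \ S, S ∩ X ∈ B y) ∧ (#(Y \ S) ≤ 1 ∨ Y \ S = Y) := by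
  simp only [layeredFamily, mem_filter, mem_powerset]

lemma layeredFamily_nonempty : (layeredFamily X Y B).Nonempty :=
  have hYX : Y \ (X ∪ Y) = ∅ := sdiff_eq_empty_iff_subset.2 subset_union_right
  ⟨X ∪ Y, mem_layeredFamily.2 (by simp [hYX])⟩

lemma supClosed_layeredFamily (hB : ∀ y ∈ Y, SupClosed (B y : Set (Finset α))) :
    SupClosed (layeredFamily X Y B : Set (Finset α)) := by
  intro S hS T hT
  rw [mem_coe, mem_layeredFamily] at hS hT
  rw [mem_coe, mem_layeredFamily, sup_eq_union, sdiff_union_distrib, union_inter_distrib_right]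
  refine ⟨union_subset hS.1 hT.1, fun y hy ↦ ?_, ?_⟩
  · obtain ⟨hyS, hyT⟩ := mem_inter.1 hy
    exact hB y (mem_sdiff.1 hyS).1 (hS.2.1 y hyS) (hT.2.1 y hyT)
  · rcases hS.2.2 with hS' | hS'
    · exact .inl ((card_le_card inter_subset_left).trans hS')
    rcases hT.2.2 with hT' | hT'
    · exact .inl ((card_le_card inter_subset_right).trans hT')
    · exact .inr (by rw [hS', hT', inter_self])

lemma mem_layeredFamily_of_forall_mem (hXY : Disjoint X Y) {S : Finset α} (hSX : S ⊆ X)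
    (hS : ∀ y ∈ Y, S ∈ B y) : S ∈ layeredFamily X Y B := by
  have hY : Y \ S = Y := sdiff_eq_self_of_disjoint (hXY.symm.mono_right hSX)
  refine mem_layeredFamily.2 ⟨hSX.trans subset_union_left, fun y hy ↦ ?_, .inr hY⟩
  rw [inter_eq_left.2 hSX]
  exact hS y (mem_sdiff.1 hy).1

lemma union_erase_inter_left (hXY : Disjoint X Y) {T : Finset α} (hT : T ⊆ X) (y : α) :
    (T ∪ Y.erase y) ∩ X = T := by
  rw [union_inter_distrib_right, inter_eq_left.2 hT,
    disjoint_iff_inter_eq_empty.1 (hXY.symm.mono_left (erase_subset y Y)), union_empty]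

lemma sdiff_union_erase (hXY : Disjoint X Y) {T : Finset α} (hT : T ⊆ X) {y : α} (hy : y ∈ Y) :
    Y \ (T ∪ Y.erase y) = {y} := by
  rw [sdiff_union_distrib, sdiff_eq_self_of_disjoint (hXY.symm.mono_right hT),
    sdiff_erase_self hy, inter_eq_right.2 (singleton_subset_iff.2 hy)]

lemma union_erase_mem_layeredFamily (hXY : Disjoint X Y) {T : Finset α} (hTX : T ⊆ X) {y : α}
    (hy : y ∈ Y) (hT : T ∈ B y) : T ∪ Y.erase y ∈ layeredFamily X Y B := by
  rw [mem_layeredFamily, sdiff_union_erase hXY hTX hy, union_erase_inter_left hXY hTX]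
  exact ⟨union_subset_union hTX (erase_subset y Y), by simpa using hT, .inl (card_singleton y).le⟩

lemma inter_union_erase_of_sdiff_eq_singleton {S : Finset α} (hS : S ⊆ X ∪ Y) {y : α}
    (hy : Y \ S = {y}) : S ∩ X ∪ Y.erase y = S := by
  have herase : Y.erase y = S ∩ Y := by
    rw [← sdiff_singleton_eq_erase, ← hy, sdiff_sdiff_right_self, inf_eq_inter, inter_comm]
  rw [herase, ← inter_union_distrib_left, inter_eq_left.2 hS]

lemma balance_layeredFamily_filter_card_sdiff_eq_one (hXY : Disjoint X Y)
    (hB : ∀ y ∈ Y, B y ⊆ X.powerset) {z : α} (hz : z ∈ X) :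
    balance z {S ∈ layeredFamily X Y B | #(Y \ S) = 1} = ∑ y ∈ Y, balance z (B y) := by
  have hBX : ∀ p ∈ Y.sigma B, p.1 ∈ Y ∧ p.2 ∈ B p.1 ∧ p.2 ⊆ X := fun p hp ↦
    have hp := mem_sigma.1 hp
    ⟨hp.1, hp.2, mem_powerset.1 (hB _ hp.1 hp.2)⟩
  simp only [balance]
  rw [← sum_sigma Y B fun p ↦ membershipSign z p.2]
  symm
  refine sum_nbij (fun p ↦ p.2 ∪ Y.erase p.1) ?maps ?inj ?surj ?sign
  case maps =>
    intro p hp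
    obtain ⟨hy, hT, hTX⟩ := hBX p hp
    exact mem_filter.2 ⟨union_erase_mem_layeredFamily hXY hTX hy hT,
      by rw [sdiff_union_erase hXY hTX hy, card_singleton]⟩
  case inj =>
    rintro ⟨y, T⟩ hp ⟨y', T'⟩ hp' h
    obtain ⟨hy, -, hTX⟩ := hBX _ hp
    obtain ⟨hy', -, hTX'⟩ := hBX _ hp'
    dsimp only at h hy hy' hTX hTX'
    obtain rfl : y = y' := by
      rw [← singleton_inj, ← sdiff_union_erase hXY hTX hy, h, sdiff_union_erase hXY hTX' hy']
    obtain rfl : T = T' := by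
      rw [← union_erase_inter_left hXY hTX y, h, union_erase_inter_left hXY hTX' y]
    rfl
  case surj =>
    intro S hS
    obtain ⟨hS, hcard⟩ := mem_filter.1 hS
    obtain ⟨hSXY, hSB, -⟩ := mem_layeredFamily.1 hS
    obtain ⟨y, hy⟩ := card_eq_one.1 hcard
    have hyS : y ∈ Y \ S := hy ▸ mem_singleton_self y
    exact ⟨⟨y, S ∩ X⟩, mem_coe.2 (mem_sigma.2 ⟨(mem_sdiff.1 hyS).1, hSB y hyS⟩),
      inter_union_erase_of_sdiff_eq_singleton hSXY hy⟩
  case sign =>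
    intro p _
    exact (membershipSign_union_of_notMem
      (fun h ↦ disjoint_left.1 hXY hz (mem_of_mem_erase h)) _).symm

lemma card_layeredFamily_filter_card_sdiff_ne_one_le :
    #{S ∈ layeredFamily X Y B | #(Y \ S) ≠ 1} ≤ 2 * 2 ^ #X := by
  have hsub : {S ∈ layeredFamily X Y B | #(Y \ S) ≠ 1} ⊆
      X.powerset ∪ X.powerset.image (· ∪ Y) := by
    intro S hS
    obtain ⟨hS, hne⟩ := mem_filter.1 hS
    obtain ⟨hSXY, -, hlayer⟩ := mem_layeredFamily.1 hS
    rw [mem_union, mem_powerset, mem_image]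
    rcases hlayer with hle | hbot
    · have hYS : Y ⊆ S := sdiff_eq_empty_iff_subset.1 (card_eq_zero.1 (by omega))
      refine .inr ⟨S ∩ X, mem_powerset.2 inter_subset_right, ?_⟩
      rw [union_comm, union_inter_distrib_left, union_eq_right.2 hYS, union_comm Y,
        inter_eq_left.2 hSXY]
    · exact .inl ((Finset.sdiff_eq_self_iff_disjoint.1 hbot).symm.left_le_of_le_sup_right hSXY)
  calc _ ≤ #X.powerset + #(X.powerset.image (· ∪ Y)) :=
        (card_le_card hsub).trans (card_union_le _ _)
    _ ≤ #X.powerset + #X.powerset := Nat.add_le_add_left card_image_le _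
    _ = 2 * 2 ^ #X := by rw [card_powerset, two_mul]

lemma balance_layeredFamily_le (hXY : Disjoint X Y) (hB : ∀ y ∈ Y, B y ⊆ X.powerset) {z : α}
    (hz : z ∈ X) :
    balance z (layeredFamily X Y B) ≤ ∑ y ∈ Y, balance z (B y) + 2 * 2 ^ #X := by
  rw [← balance_filter_add_balance_filter_not z _ fun S ↦ #(Y \ S) = 1,
    balance_layeredFamily_filter_card_sdiff_eq_one hXY hB hz]
  gcongr
  exact (balance_le_card z _).trans
    (mod_cast card_layeredFamily_filter_card_sdiff_ne_one_le)

end Layered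

section NonFC

variable {A : Finset (Finset ℕ)}

lemma subset_famUniverse {S : Finset ℕ} (hS : S ∈ A) : S ⊆ famUniverse A := le_sup (f := id) hS

lemma not_isFC_of_forall_balance_neg {F : Finset (Finset ℕ)} (hF : UnionClosed F) (hAF : A ⊆ F)
    (hneg : ∀ z ∈ famUniverse A, balance z F < 0) : ¬ IsFC A := by
  intro hA
  obtain ⟨z, hz, hhalf⟩ := hA F hF hAF
  have hlt := hneg z hz
  rw [balance_eq_two_mul_card_sub_card] at hlt
  omega

lemma not_isFC_of_disjoint {Y : Finset ℕ} {B : ℕ → Finset (Finset ℕ)}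
    (hY : Disjoint (famUniverse A) Y)
    (hsup : ∀ y ∈ Y, SupClosed (B y : Set (Finset ℕ))) (hA : ∀ y ∈ Y, A ⊆ B y)
    (hB : ∀ y ∈ Y, B y ⊆ (famUniverse A).powerset)
    (hneg : ∀ z ∈ famUniverse A, ∑ y ∈ Y, balance z (B y) + 2 * 2 ^ #(famUniverse A) < 0) :
    ¬ IsFC A := by
  have hclosed : UnionClosed (layeredFamily (famUniverse A) Y B) :=
    ⟨layeredFamily_nonempty, fun _ hS _ hT ↦ supClosed_layeredFamily hsup hS hT⟩
  refine not_isFC_of_forall_balance_neg hclosed (fun S hS ↦ ?_)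
    fun z hz ↦ (balance_layeredFamily_le hY hB hz).trans_lt (hneg z hz)
  exact mem_layeredFamily_of_forall_mem hY (subset_famUniverse hS) fun y hy ↦ hA y hy hS

lemma exists_embedding_disjoint_map {α : Type*} [Infinite α] (X : Finset α) (κ : Type*)
    [Fintype κ] : ∃ e : κ ↪ α, Disjoint X (univ.map e) := by
  obtain ⟨Y, hYX, hcard⟩ := X.finite_toSet.infinite_compl.exists_subset_card_eq (Fintype.card κ)
  obtain ⟨e, he⟩ := Function.Embedding.exists_of_card_le_finset hcard.ge
  refine ⟨e, disjoint_right.2 fun y hy ↦ ?_⟩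
  obtain ⟨k, -, rfl⟩ := mem_map.1 hy
  exact hYX (he ⟨k, rfl⟩)

theorem not_isFC_of_sum_mul_balance_neg {ι : Type*} [Fintype ι] {B : ι → Finset (Finset ℕ)}
    (w : ι → ℕ) (hsup : ∀ i, SupClosed (B i : Set (Finset ℕ))) (hA : ∀ i, A ⊆ B i)
    (hB : ∀ i, B i ⊆ (famUniverse A).powerset)
    (hneg : ∀ z ∈ famUniverse A, ∑ i, w i * balance z (B i) < 0) : ¬ IsFC A := by
  -- Each `B i` gets `N * w i` fresh elements, `N` being so large that the two layers which are
  -- not copies of some `B i` cannot compensate for the negative total.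
  set N : ℕ := 2 * 2 ^ #(famUniverse A) + 1 with hN
  obtain ⟨e, he⟩ := exists_embedding_disjoint_map (famUniverse A) (Σ i, Fin (N * w i))
  set C : ℕ → Finset (Finset ℕ) := Function.extend e (fun k ↦ B k.1) fun _ ↦ ∅
  have hC : ∀ k, C (e k) = B k.1 := e.injective.extend_apply _ _
  refine not_isFC_of_disjoint (B := C) he ?_ ?_ ?_ fun z hz ↦ ?_
  · exact forall_mem_map.2 fun k _ ↦ (hC k).symm ▸ hsup k.1
  · exact forall_mem_map.2 fun k _ ↦ (hC k).symm ▸ hA k.1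
  · exact forall_mem_map.2 fun k _ ↦ (hC k).symm ▸ hB k.1
  · have hsum : ∑ y ∈ univ.map e, balance z (C y) = N * ∑ i, w i * balance z (B i) := by
      simp [hC, Fintype.sum_sigma, mul_sum, mul_assoc]
    have hNsum : (N : ℤ) * ∑ i, w i * balance z (B i) ≤ N * (-1) :=
      mul_le_mul_of_nonneg_left (Int.le_sub_one_of_lt (hneg z hz)) N.cast_nonneg
    calc ∑ y ∈ univ.map e, balance z (C y) + 2 * 2 ^ #(famUniverse A)
        ≤ N * (-1) + 2 * 2 ^ #(famUniverse A) := by rw [hsum]; gcongr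
      _ < 0 := by rw [hN]; push_cast; linarith

end NonFC

section Core

variable {α : Type*} [DecidableEq α] {A : Finset (Finset α)}

/-- The core of `T` with respect to `A`: the largest union of members of `A` contained in `T`. -/
def core (A : Finset (Finset α)) (T : Finset α) : Finset α := {S ∈ A | S ⊆ T}.sup id

lemma core_mono : Monotone (core A) := fun _ _ hST ↦
  sup_mono (monotone_filter_right A fun _ _ h ↦ h.trans hST)

lemma sdiff_core_eq_empty_of_mem {T : Finset α} (hT : T ∈ A) : T \ core A T = ∅ :=
  sdiff_eq_empty_iff_subset.2 (le_sup (f := id) (mem_filter.2 ⟨hT, subset_rfl⟩))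

/-- The subsets of the universe of `A` that, if they contain `x`, contain a member of `A`
through `x`. -/
def coveredAt (A : Finset (Finset α)) (x : α) : Finset (Finset α) :=
  {T ∈ (A.sup id).powerset | x ∉ T \ core A T}

lemma subset_coveredAt (x : α) : A ⊆ coveredAt A x := fun T hT ↦
  mem_filter.2 ⟨mem_powerset.2 (le_sup (f := id) hT), by simp [sdiff_core_eq_empty_of_mem hT]⟩

lemma supClosed_coveredAt (x : α) : SupClosed (coveredAt A x : Set (Finset α)) := by
  intro S hS T hT
  simp only [coveredAt, coe_filter, mem_powerset, Set.mem_ofPred_eq, mem_sdiff, not_and_not_right,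
    sup_eq_union, mem_union] at hS hT ⊢
  refine ⟨union_subset hS.1 hT.1, ?_⟩
  rintro (hx | hx)
  · exact core_mono subset_union_left (hS.2 hx)
  · exact core_mono subset_union_right (hT.2 hx)

lemma balance_coveredAt {z : α} (hz : z ∈ A.sup id) (x : α) :
    balance z (coveredAt A x) = -balance z {T ∈ (A.sup id).powerset | x ∈ T \ core A T} := by
  have hsplit :=
    balance_filter_add_balance_filter_not z (A.sup id).powerset fun T ↦ x ∈ T \ core A T
  rw [balance_powerset hz] at hsplit
  exact eq_neg_of_add_eq_zero_right hsplit

lemma sum_mul_balance_coveredAt {z : α} (hz : z ∈ A.sup id) (w : α → ℕ) :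
    ∑ x ∈ A.sup id, w x * balance z (coveredAt A x) =
      -∑ T ∈ (A.sup id).powerset, membershipSign z T * ∑ x ∈ T \ core A T, (w x : ℤ) := by
  simp only [balance_coveredAt hz, mul_neg, sum_neg_distrib, neg_inj]
  simp only [balance, mul_sum]
  refine (sum_comm' fun x T ↦ ?_).trans
    (sum_congr rfl fun T _ ↦ sum_congr rfl fun x _ ↦ mul_comm _ _)
  simp only [mem_filter, mem_powerset]
  exact ⟨fun ⟨_, hT, hx⟩ ↦ ⟨hx, hT⟩, fun ⟨hx, hT⟩ ↦ ⟨hT (mem_sdiff.1 hx).1, hT, hx⟩⟩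

theorem not_isFC_of_sum_membershipSign_mul_pos {A : Finset (Finset ℕ)} (w : ℕ → ℕ)
    (hpos : ∀ z ∈ famUniverse A, 0 <
      ∑ T ∈ (famUniverse A).powerset, membershipSign z T * ∑ x ∈ T \ core A T, (w x : ℤ)) :
    ¬ IsFC A := by
  refine not_isFC_of_sum_mul_balance_neg (ι := famUniverse A) (B := fun x ↦ coveredAt A x)
    (fun x ↦ w x) (fun x ↦ supClosed_coveredAt _) (fun x ↦ subset_coveredAt _)
    (fun x ↦ filter_subset _ _) fun z hz ↦ ?_
  rw [sum_coe_sort (famUniverse A) fun x ↦ w x * balance z (coveredAt A x)]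
  exact (sum_mul_balance_coveredAt hz w).trans_lt (neg_neg_of_pos (hpos z hz))

end Core

section Witness

/-- The Non-FC family of fifteen 4-element subsets of `{1, …, 10}`. -/
def witness : Finset (Finset ℕ) :=
  {{1, 2, 3, 4}, {5, 6, 7, 8}, {5, 6, 7, 9}} ∪
    (Icc 5 10).biUnion fun j ↦ {{1, 2, 3, j}, {1, 2, 4, j}}

/-- The weights certifying that `witness` is Non-FC, found by a search among small weights that
are invariant under the evident symmetries `1 ↔ 2` and `3 ↔ 4` of `witness`. -/
def witnessWeight (x : ℕ) : ℕ := if x ≤ 2 then 16 else if x ≤ 4 then 6 else 1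

lemma card_witness : #witness = 15 := by decide +kernel

lemma isKFamily_witness : IsKFamily 4 10 witness := by
  unfold IsKFamily
  constructor <;> decide +kernel

lemma sum_membershipSign_mul_witnessWeight_pos : ∀ z ∈ Icc 1 10, 0 <
    ∑ T ∈ (Icc 1 10).powerset,
      membershipSign z T * ∑ x ∈ T \ core witness T, (witnessWeight x : ℤ) := by
  decide +kernel

lemma not_isFC_witness : ¬ IsFC witness := by
  refine not_isFC_of_sum_membershipSign_mul_pos witnessWeight ?_
  rw [isKFamily_witness.2]
  exact sum_membershipSign_mul_witnessWeight_pos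

end Witness

end FranklComplete

/-- FC(4, 10) ≥ 16: there is a Non-FC family of 15 distinct 4-element subsets of
{1, …, 10} with universe {1, …, 10}. -/
theorem FC_lower_bound_4_10 :
    ∃ A : Finset (Finset ℕ), A.card = 15 ∧ IsKFamily 4 10 A ∧ ¬ IsFC A := by
  exact ⟨FranklComplete.witness, FranklComplete.card_witness, FranklComplete.isKFamily_witness,
    FranklComplete.not_isFC_witness⟩
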